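/- arXiv:2011.12223 — 4 statements merged into one kernel-verified Lean document; each statement's English description precedes it below -/
import Mathlib

section
/- For every nonzero v ∈ V₅: (i) F_v ∩ ⋀³V₅ = v∧⋀²V₅ := {v∧α : α ∈ ⋀²V₅}, which is 6-dimensional; (ii) v∧⋀²V₅ = {β ∈ ⋀³V₅ : vol(x∧γ∧β) = 0 for all γ ∈ v∧V₅}, i.e. it is the annihilator of v∧V₅ under the pairing (γ,β) ↦ vol(x∧γ∧β); (iii) writing each element of F_v uniquely as η + x∧w with η ∈ ⋀³V₅ and w ∈ ⋀²V₅ (using the direct sum decomposition ⋀³V₆ = ⋀³V₅ ⊕ (x∧⋀²V₅)), the set of components w arising from elements of F_v is exactly v∧V₅. -/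
open ExteriorAlgebra Module

noncomputable section

namespace EPW

variable (V : Type) [AddCommGroup V] [Module ℂ V]

/-- A volume form `vol : ⋀ᵏV → ℂ` extended to the whole exterior algebra by composing with
the projection onto the degree-`k` graded component; on `⋀ᵏV` it agrees with `vol`. -/
def volC (k : ℕ) (vol : ⋀[ℂ]^k V →ₗ[ℂ] ℂ) : ExteriorAlgebra ℂ V →ₗ[ℂ] ℂ :=
  vol ∘ₗ (DirectSum.component ℂ ℕ (fun i => ↥(⋀[ℂ]^i V)) k) ∘ₗ
    (DirectSum.decomposeLinearEquiv (fun i : ℕ => ⋀[ℂ]^i V)).toLinearMap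

/-- `F_v = v ∧ ⋀²V₆ = {v ∧ η : η ∈ ⋀²V₆}`. -/
def Fv (v : V) : Submodule ℂ (ExteriorAlgebra ℂ V) :=
  Submodule.map (LinearMap.mulLeft ℂ (ExteriorAlgebra.ι ℂ v)) (⋀[ℂ]^2 V)

/-- The image of `⋀ᵏW` inside the exterior algebra of `V`, for a subspace `W ⊆ V`. -/
def extPow (W : Submodule ℂ V) (k : ℕ) : Submodule ℂ (ExteriorAlgebra ℂ V) :=
  (Submodule.map (ExteriorAlgebra.ι ℂ) W) ^ k

/-- `v ∧ W = {v ∧ u : u ∈ W}` for a subspace `W ⊆ V`. -/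
def vWedge (v : V) (W : Submodule ℂ V) : Submodule ℂ (ExteriorAlgebra ℂ V) :=
  Submodule.map (LinearMap.mulLeft ℂ (ExteriorAlgebra.ι ℂ v))
    (Submodule.map (ExteriorAlgebra.ι ℂ) W)

end EPW

/-!
Contraction `d⌋` by a functional `d` with `d v = 1` inverts left multiplication by `v` as far as
possible: `d⌋(v ∧ β) = β - v ∧ (d⌋β)`. So for `v ∈ W` the multiples of `v` in `⋀W` are exactly the
elements killed by `v`, and all three claims come down to showing `v ∧ β = 0` for a suitable `β`.
For (i) this is immediate, and Pascal's rule gives the dimension. For (iii), multiplying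
`η + x ∧ w ∈ F_v` by `v` and contracting with a functional that vanishes on `V₅` but not at `x`
isolates `v ∧ w = 0`. For (ii), the pairing `⋀ʲW × ⋀ⁿ⁻ʲW → ⋀ⁿW` is nondegenerate because a nonzero
form of degree `j` is killed by a space of vectors of dimension at most `j`.
-/

namespace EPW

open CliffordAlgebra (contractLeft contractLeft_ι_mul contractLeft_algebraMap)

section CommRing

variable {R M : Type*} [CommRing R] [AddCommGroup M] [Module R M] {W : Submodule R M} {k : ℕ}

/-- The image of `⋀ᵏW` inside the exterior algebra of the ambient module. This is the notion
`EPW.extPow` over an arbitrary ring; it is reducible so that the two unify. -/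
abbrev extPowOf (W : Submodule R M) (k : ℕ) : Submodule R (ExteriorAlgebra R M) :=
  W.map (ι R) ^ k

/-- The submodule `v ∧ S = {v ∧ s : s ∈ S}` of the exterior algebra, used to treat `EPW.Fv` and
`EPW.vWedge` uniformly, over any ring. -/
abbrev wedge (v : M) (S : Submodule R (ExteriorAlgebra R M)) : Submodule R (ExteriorAlgebra R M) :=
  S.map (LinearMap.mulLeft R (ι R v))

lemma ι_mul_ι_mul_self (a : M) (φ : ExteriorAlgebra R M) : ι R a * (ι R a * φ) = 0 := by
  rw [← mul_assoc, ι_sq_zero, zero_mul]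

lemma ι_mul_ι_mul_swap (a b : M) (φ : ExteriorAlgebra R M) :
    ι R a * (ι R b * φ) = -(ι R b * (ι R a * φ)) := by
  rw [← mul_assoc, eq_neg_of_add_eq_zero_left (ι_add_mul_swap a b), neg_mul, mul_assoc]

lemma extPowOf_mono {W' : Submodule R M} (h : W ≤ W') (k : ℕ) : extPowOf W k ≤ extPowOf W' k :=
  pow_le_pow_left' (Submodule.map_mono h) k

lemma extPowOf_top (k : ℕ) : extPowOf (⊤ : Submodule R M) k = ⋀[R]^k M := by
  rw [extPowOf, Submodule.map_top]

lemma extPowOf_le_exteriorPower (W : Submodule R M) (k : ℕ) : extPowOf W k ≤ ⋀[R]^k M :=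
  (extPowOf_mono le_top k).trans (extPowOf_top k).le

lemma ι_mem_extPowOf_one {a : M} (ha : a ∈ W) : ι R a ∈ extPowOf W 1 := by
  rw [extPowOf, pow_one]
  exact Submodule.mem_map_of_mem ha

lemma mul_mem_extPowOf {j : ℕ} {φ ψ : ExteriorAlgebra R M} (hφ : φ ∈ extPowOf W j)
    (hψ : ψ ∈ extPowOf W k) : φ * ψ ∈ extPowOf W (j + k) := by
  rw [extPowOf, pow_add]
  exact Submodule.mul_mem_mul hφ hψ

lemma ι_mul_mem_extPowOf {a : M} (ha : a ∈ W) {φ : ExteriorAlgebra R M} (hφ : φ ∈ extPowOf W k) :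
    ι R a * φ ∈ extPowOf W (k + 1) :=
  add_comm 1 k ▸ mul_mem_extPowOf (ι_mem_extPowOf_one ha) hφ

lemma ι_mul_mem_exteriorPower (a : M) {φ : ExteriorAlgebra R M} (hφ : φ ∈ extPowOf W k) :
    ι R a * φ ∈ ⋀[R]^(k + 1) M := by
  rw [← extPowOf_top]
  exact ι_mul_mem_extPowOf Submodule.mem_top (extPowOf_mono le_top k hφ)

lemma wedge_extPowOf_le {v : M} (hv : v ∈ W) : wedge v (extPowOf W k) ≤ extPowOf W (k + 1) := by
  rintro _ ⟨α, hα, rfl⟩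
  exact ι_mul_mem_extPowOf hv hα

lemma mul_ι_eq_neg_one_pow_smul (v : M) {φ : ExteriorAlgebra R M} (hφ : φ ∈ extPowOf W k) :
    φ * ι R v = (-1 : R) ^ k • (ι R v * φ) := by
  induction hφ using Submodule.pow_induction_on_left' with
  | algebraMap r => simp [Algebra.commutes]
  | add φ ψ k _ _ hφ hψ => rw [add_mul, mul_add, smul_add, hφ, hψ]
  | mem_mul m hm k φ _ ih =>
    obtain ⟨a, -, rfl⟩ := hm
    rw [mul_assoc, ih, mul_smul_comm, ι_mul_ι_mul_swap a v, pow_succ, mul_smul, neg_one_smul]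

lemma mul_eq_zero_of_mem_wedge {v : M} {S : Submodule R (ExteriorAlgebra R M)}
    {β γ : ExteriorAlgebra R M} (hγ : γ ∈ wedge v (extPowOf W k)) (hβ : β ∈ wedge v S) :
    γ * β = 0 := by
  obtain ⟨δ, hδ, rfl⟩ := hγ
  obtain ⟨α, -, rfl⟩ := hβ
  rw [LinearMap.mulLeft_apply, LinearMap.mulLeft_apply, mul_assoc, ← mul_assoc δ,
    mul_ι_eq_neg_one_pow_smul v hδ, smul_mul_assoc, mul_smul_comm, mul_assoc, ι_mul_ι_mul_self,
    smul_zero]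

lemma contractLeft_eq_zero {d : Dual R M} (hd : W ≤ LinearMap.ker d) {φ : ExteriorAlgebra R M}
    (hφ : φ ∈ extPowOf W k) : contractLeft d φ = 0 := by
  induction hφ using Submodule.pow_induction_on_left' with
  | algebraMap r => exact contractLeft_algebraMap _ d r
  | add φ ψ k _ _ hφ hψ => rw [map_add, hφ, hψ, add_zero]
  | mem_mul m hm _ φ _ ih =>
    obtain ⟨a, ha, rfl⟩ := hm
    rw [contractLeft_ι_mul, hd ha, ih, zero_smul, mul_zero, sub_zero]

lemma contractLeft_mem_extPowOf (d : Dual R M) {φ : ExteriorAlgebra R M}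
    (hφ : φ ∈ extPowOf W (k + 1)) : contractLeft d φ ∈ extPowOf W k := by
  induction k generalizing φ with
  | zero =>
    rw [zero_add, extPowOf, pow_one] at hφ
    obtain ⟨a, -, rfl⟩ := hφ
    rw [CliffordAlgebra.contractLeft_ι, extPowOf, pow_zero]
    exact Submodule.algebraMap_mem _
  | succ k ih =>
    rw [extPowOf, pow_succ'] at hφ
    induction hφ using Submodule.mul_induction_on' with
    | mem_mul_mem m hm φ hφ =>
      obtain ⟨a, ha, rfl⟩ := hm
      rw [contractLeft_ι_mul]
      exact sub_mem (Submodule.smul_mem _ _ hφ) (ι_mul_mem_extPowOf ha (ih hφ))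
    | add φ _ ψ _ hφ hψ => rw [map_add]; exact add_mem hφ hψ

lemma contractLeft_ι_mul_of_le_ker {d : Dual R M} {x : M} (hdx : d x = 1)
    (hd : W ≤ LinearMap.ker d) {φ : ExteriorAlgebra R M} (hφ : φ ∈ extPowOf W k) :
    contractLeft d (ι R x * φ) = φ := by
  rw [contractLeft_ι_mul, contractLeft_eq_zero hd hφ, hdx, one_smul, mul_zero, sub_zero]

lemma eq_ι_mul_contractLeft {d : Dual R M} {v : M} (hdv : d v = 1) {φ : ExteriorAlgebra R M}
    (h : ι R v * φ = 0) : φ = ι R v * contractLeft d φ := by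
  have := congrArg (contractLeft d) h
  rwa [contractLeft_ι_mul, hdv, one_smul, map_zero, sub_eq_zero] at this

lemma extPowOf_eq_map (W : Submodule R M) (k : ℕ) :
    extPowOf W k = (⋀[R]^k W).map (ExteriorAlgebra.map W.subtype).toLinearMap := by
  rw [exteriorPower, Submodule.map_pow, ι_range_map_map, Submodule.range_subtype]

instance [Module.Finite R W] : Module.Finite R (extPowOf W k) :=
  Module.Finite.iff_fg.mpr (((Module.Finite.iff_fg.mp ‹_›).map _).pow k)

end CommRing

section Field

variable {K V : Type*} [Field K] [AddCommGroup V] [Module K V] {W : Submodule K V} {x v : V}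
  {k : ℕ}

lemma exists_dual_eq_one_of_notMem (hx : x ∉ W) :
    ∃ d : Dual K V, d x = 1 ∧ W ≤ LinearMap.ker d := by
  obtain ⟨d, hdW, hdx⟩ := LinearMap.exists_extend_of_notMem (0 : W →ₗ[K] K) hx 1
  exact ⟨d, hdx, fun w hw ↦ LinearMap.congr_fun hdW ⟨w, hw⟩⟩

lemma mem_wedge_extPowOf_iff (hvW : v ∈ W) (hv : v ≠ 0) {β : ExteriorAlgebra K V} :
    β ∈ wedge v (extPowOf W k) ↔ β ∈ extPowOf W (k + 1) ∧ ι K v * β = 0 := by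
  constructor
  · rintro ⟨α, hα, rfl⟩
    exact ⟨ι_mul_mem_extPowOf hvW hα, ι_mul_ι_mul_self v α⟩
  · rintro ⟨hβ, h⟩
    obtain ⟨d, hdv⟩ := Projective.exists_dual_eq_one K hv
    exact ⟨_, contractLeft_mem_extPowOf d hβ, (eq_ι_mul_contractLeft hdv h).symm⟩

lemma eq_zero_of_ι_mul_eq_zero_of_notMem (hx : x ∉ W) {φ : ExteriorAlgebra K V}
    (hφ : φ ∈ extPowOf W k) (h : ι K x * φ = 0) : φ = 0 := by
  obtain ⟨d, hdx, hdW⟩ := exists_dual_eq_one_of_notMem hx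
  rw [← contractLeft_ι_mul_of_le_ker hdx hdW hφ, h, map_zero]

lemma finrank_extPowOf [FiniteDimensional K W] (k : ℕ) :
    finrank K (extPowOf W k) = (finrank K W).choose k := by
  have hinj : Function.Injective (ExteriorAlgebra.map W.subtype) :=
    map_injective_field W.ker_subtype
  rw [extPowOf_eq_map, ← exteriorPower.finrank_eq]
  exact (Submodule.equivMapOfInjective _ hinj _).finrank_eq.symm

lemma finrank_wedge_add_finrank_wedge [FiniteDimensional K W] (hvW : v ∈ W) (hv : v ≠ 0) (k : ℕ) :
    finrank K (wedge v (extPowOf W (k + 1))) + finrank K (wedge v (extPowOf W k)) =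
      (finrank K W).choose (k + 1) := by
  let f := (LinearMap.mulLeft K (ι K v)).domRestrict (extPowOf W (k + 1))
  have hrange : LinearMap.range f = wedge v (extPowOf W (k + 1)) := LinearMap.range_domRestrict _ _
  have hker : (LinearMap.ker f).map (extPowOf W (k + 1)).subtype = wedge v (extPowOf W k) := by
    ext β
    rw [mem_wedge_extPowOf_iff hvW hv, LinearMap.ker_domRestrict, Submodule.map_comap_subtype]
    rfl
  rw [← hrange, ← hker, Submodule.finrank_map_subtype_eq, f.finrank_range_add_finrank_ker,
    finrank_extPowOf]

lemma finrank_wedge_extPowOf {n : ℕ} (hW : finrank K W = n + 1) (hvW : v ∈ W) (hv : v ≠ 0)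
    (k : ℕ) : finrank K (wedge v (extPowOf W k)) = n.choose k := by
  have : FiniteDimensional K W := .of_finrank_pos (by lia)
  induction k with
  | zero =>
    have hspan : wedge v (extPowOf W 0) = Submodule.span K {ι K v} := by
      rw [wedge, extPowOf, pow_zero, Submodule.one_eq_span, Submodule.map_span, Set.image_singleton,
        LinearMap.mulLeft_apply, mul_one]
    rw [hspan, finrank_span_singleton (by rwa [Ne, ι_eq_zero_iff]), Nat.choose_zero_right]
  | succ k ih =>
    have := finrank_wedge_add_finrank_wedge hvW hv k
    rw [ih, hW, Nat.choose_succ_succ] at this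
    lia

lemma finrank_le_finrank_inf_ker_add_one (U : Submodule K V) (d : Dual K V) :
    finrank K U ≤ finrank K (U ⊓ LinearMap.ker d : Submodule K V) + 1 := by
  by_cases hU : FiniteDimensional K U
  · have hker : finrank K (LinearMap.ker (d.domRestrict U)) =
        finrank K (U ⊓ LinearMap.ker d : Submodule K V) := by
      rw [← Submodule.finrank_map_subtype_eq, LinearMap.ker_domRestrict,
        Submodule.map_comap_subtype]
    have hrange := (LinearMap.range (d.domRestrict U)).finrank_le
    rw [finrank_self] at hrange
    have := (d.domRestrict U).finrank_range_add_finrank_ker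
    lia
  · simp [finrank_of_not_finite hU]

-- Induction on the degree: if `d u = 1` with `u ∈ U`, then `d⌋φ` has smaller degree, is killed by
-- `U ⊓ ker d`, and determines `φ = u ∧ (d⌋φ)`.
lemma eq_zero_of_forall_ι_mul_eq_zero {U : Submodule K V} (hU : k < finrank K U)
    {φ : ExteriorAlgebra K V} (hφ : φ ∈ extPowOf W k) (h : ∀ u ∈ U, ι K u * φ = 0) : φ = 0 := by
  induction k generalizing U φ with
  | zero =>
    obtain ⟨u, hu, hu0⟩ := U.exists_mem_ne_zero_of_ne_bot (by rintro rfl; simp at hU)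
    have hu_bot : u ∉ (⊥ : Submodule K V) := by rwa [Submodule.mem_bot]
    have hφ_bot : φ ∈ extPowOf (⊥ : Submodule K V) 0 := by rwa [extPowOf, pow_zero] at hφ ⊢
    exact eq_zero_of_ι_mul_eq_zero_of_notMem hu_bot hφ_bot (h u hu)
  | succ k ih =>
    obtain ⟨u, hu, hu0⟩ := U.exists_mem_ne_zero_of_ne_bot (by rintro rfl; simp at hU)
    obtain ⟨d, hdu⟩ := Projective.exists_dual_eq_one K hu0
    have hφd : φ = ι K u * contractLeft d φ := eq_ι_mul_contractLeft hdu (h u hu)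
    have hd : contractLeft d φ = 0 := by
      have := finrank_le_finrank_inf_ker_add_one U d
      refine ih (U := U ⊓ LinearMap.ker d) (by lia) (contractLeft_mem_extPowOf d hφ) ?_
      rintro w ⟨hw, hdw⟩
      have hdwφ := contractLeft_ι_mul d w φ
      rwa [h w hw, map_zero, hdw, zero_smul, zero_sub, zero_eq_neg] at hdwφ
    rw [hφd, hd, mul_zero]

lemma eq_zero_of_forall_mul_eq_zero {j q : ℕ} (hjq : j + q ≤ finrank K W)
    {φ : ExteriorAlgebra K V} (hφ : φ ∈ extPowOf W j) (h : ∀ δ ∈ extPowOf W q, δ * φ = 0) :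
    φ = 0 := by
  induction q generalizing j φ with
  | zero => simpa using h 1 (by rw [extPowOf, pow_zero]; exact Submodule.one_le.mp le_rfl)
  | succ q ih =>
    refine eq_zero_of_forall_ι_mul_eq_zero (U := W) (by lia) hφ fun u hu ↦ ?_
    refine ih (by lia) (ι_mul_mem_extPowOf hu hφ) fun δ hδ ↦ ?_
    rw [← mul_assoc]
    exact h _ (mul_mem_extPowOf hδ (ι_mem_extPowOf_one hu))

theorem wedge_exteriorPower_inf_extPowOf (hvW : v ∈ W) (hv : v ≠ 0) (k : ℕ) :
    wedge v (⋀[K]^k V) ⊓ extPowOf W (k + 1) = wedge v (extPowOf W k) := by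
  refine le_antisymm ?_ (le_inf (Submodule.map_mono (extPowOf_le_exteriorPower W k))
    (wedge_extPowOf_le hvW))
  rintro _ ⟨⟨η, -, rfl⟩, hη⟩
  exact (mem_wedge_extPowOf_iff hvW hv).mpr ⟨hη, ι_mul_ι_mul_self v η⟩

lemma mem_wedge_of_forall_mul_eq_zero {p q : ℕ} (hW : p + q + 2 ≤ finrank K W) (hvW : v ∈ W)
    (hv : v ≠ 0) {β : ExteriorAlgebra K V} (hβ : β ∈ extPowOf W (p + 1))
    (h : ∀ γ ∈ wedge v (extPowOf W q), γ * β = 0) : β ∈ wedge v (extPowOf W p) := by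
  refine (mem_wedge_extPowOf_iff hvW hv).mpr ⟨hβ, ?_⟩
  refine eq_zero_of_forall_mul_eq_zero (q := q) (by lia) (ι_mul_mem_extPowOf hvW hβ) ?_
  intro δ hδ
  have hvδβ : ι K v * δ * β = 0 := h _ (Submodule.mem_map_of_mem hδ)
  rw [← mul_assoc, mul_ι_eq_neg_one_pow_smul v hδ, smul_mul_assoc, hvδβ, smul_zero]

theorem coe_wedge_eq_annihilator {n p q : ℕ} (hn : p + q + 1 = n)
    (hW : finrank K W = n + 1) (hx : x ∉ W) (hvW : v ∈ W) (hv : v ≠ 0)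
    {vol : ExteriorAlgebra K V →ₗ[K] K} (hvol : Set.InjOn vol (⋀[K]^(n + 2) V)) :
    (wedge v (extPowOf W p) : Set (ExteriorAlgebra K V)) =
      {β | β ∈ extPowOf W (p + 1) ∧
        ∀ γ ∈ wedge v (extPowOf W q), vol (ι K x * γ * β) = 0} := by
  ext β
  constructor
  · refine fun hβ ↦ ⟨wedge_extPowOf_le hvW hβ, fun γ hγ ↦ ?_⟩
    rw [mul_assoc, mul_eq_zero_of_mem_wedge hγ hβ, mul_zero, map_zero]
  · rintro ⟨hβ, h⟩
    refine mem_wedge_of_forall_mul_eq_zero (q := q) (by lia) hvW hv hβ fun γ hγ ↦ ?_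
    have hγβ : γ * β ∈ extPowOf W (q + 1 + (p + 1)) :=
      mul_mem_extPowOf (wedge_extPowOf_le hvW hγ) hβ
    have htop : ι K x * (γ * β) ∈ ⋀[K]^(n + 2) V := by
      rw [show n + 2 = q + 1 + (p + 1) + 1 by lia]
      exact ι_mul_mem_exteriorPower x hγβ
    refine eq_zero_of_ι_mul_eq_zero_of_notMem hx hγβ (hvol htop (zero_mem _) ?_)
    rw [← mul_assoc, h γ hγ, map_zero]

theorem setOf_add_ι_mul_mem_wedge (hx : x ∉ W) (hvW : v ∈ W) (hv : v ≠ 0) (k : ℕ) :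
    {w : ExteriorAlgebra K V | w ∈ extPowOf W (k + 1) ∧
        ∃ η ∈ extPowOf W (k + 2), η + ι K x * w ∈ wedge v (⋀[K]^(k + 1) V)} =
      wedge v (extPowOf W k) := by
  ext w
  constructor
  · rintro ⟨hw, η, hη, ζ, -, hζ⟩
    obtain ⟨d, hdx, hdW⟩ := exists_dual_eq_one_of_notMem hx
    have hvηw : ι K v * η - ι K x * (ι K v * w) = 0 := by
      rw [sub_eq_add_neg, ← ι_mul_ι_mul_swap, ← mul_add, ← hζ]
      exact ι_mul_ι_mul_self v ζ
    have hvw := congrArg (contractLeft d) hvηw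
    rw [map_sub, contractLeft_eq_zero hdW (ι_mul_mem_extPowOf hvW hη),
      contractLeft_ι_mul_of_le_ker hdx hdW (ι_mul_mem_extPowOf hvW hw), map_zero, zero_sub,
      neg_eq_zero] at hvw
    exact (mem_wedge_extPowOf_iff hvW hv).mpr ⟨hw, hvw⟩
  · rintro ⟨α, hα, rfl⟩
    refine ⟨ι_mul_mem_extPowOf hvW hα, 0, zero_mem _, -(ι K x * α),
      neg_mem (ι_mul_mem_exteriorPower x hα), ?_⟩
    simp only [LinearMap.mulLeft_apply, zero_add, mul_neg, ι_mul_ι_mul_swap v x, neg_neg]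

end Field

section Complex

variable {V : Type} [AddCommGroup V] [Module ℂ V] {k : ℕ}

lemma vWedge_eq_wedge (v : V) (W : Submodule ℂ V) : vWedge V v W = wedge v (extPowOf W 1) := by
  rw [extPowOf, pow_one, vWedge]

lemma volC_apply (vol : ⋀[ℂ]^k V →ₗ[ℂ] ℂ) (φ : ⋀[ℂ]^k V) : volC V k vol φ = vol φ :=
  congrArg vol (Subtype.ext (DirectSum.decompose_of_mem_same (fun i : ℕ ↦ ⋀[ℂ]^i V) φ.2))

lemma injOn_volC {vol : ⋀[ℂ]^k V →ₗ[ℂ] ℂ} (hvol : Function.Injective vol) :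
    Set.InjOn (volC V k vol) (⋀[ℂ]^k V) := by
  intro φ hφ ψ hψ h
  rw [volC_apply vol ⟨φ, hφ⟩, volC_apply vol ⟨ψ, hψ⟩] at h
  exact congrArg Subtype.val (hvol h)

end Complex

end EPW

open EPW in
theorem stmt5_general {K V : Type*} [Field K] [AddCommGroup V] [Module K V] {n p q : ℕ}
    (hn : p + q + 2 = n) {vol : ExteriorAlgebra K V →ₗ[K] K} (hvol : Set.InjOn vol (⋀[K]^(n + 2) V))
    {W : Submodule K V} (hW : finrank K W = n + 1) {x v : V} (hx : x ∉ W) (hvW : v ∈ W)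
    (hv : v ≠ 0) :
    (wedge v (⋀[K]^(p + 1) V) ⊓ extPowOf W (p + 2) = wedge v (extPowOf W (p + 1)) ∧
      finrank K (wedge v (extPowOf W (p + 1))) = n.choose (p + 1)) ∧
    ((wedge v (extPowOf W (p + 1)) : Set (ExteriorAlgebra K V)) =
      {β | β ∈ extPowOf W (p + 2) ∧
        ∀ γ ∈ wedge v (extPowOf W q), vol (ι K x * γ * β) = 0}) ∧
    {w : ExteriorAlgebra K V | w ∈ extPowOf W (p + 1) ∧
        ∃ η ∈ extPowOf W (p + 2), η + ι K x * w ∈ wedge v (⋀[K]^(p + 1) V)} =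
      wedge v (extPowOf W p) :=
  ⟨⟨wedge_exteriorPower_inf_extPowOf hvW hv (p + 1), finrank_wedge_extPowOf hW hvW hv (p + 1)⟩,
    coe_wedge_eq_annihilator (by lia) hW hx hvW hv hvol, setOf_add_ι_mul_mem_wedge hx hvW hv p⟩

theorem stmt5 (V : Type) [AddCommGroup V] [Module ℂ V]
    (hdim : finrank ℂ V = 6)
    (vol : ⋀[ℂ]^6 V →ₗ[ℂ] ℂ) (hvol : Function.Bijective vol)
    (V₅ : Submodule ℂ V) (hV₅ : finrank ℂ V₅ = 5)
    (x : V) (hx : x ∉ V₅)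
    (v : V) (hv5 : v ∈ V₅) (hv : v ≠ 0) :
    (EPW.Fv V v ⊓ EPW.extPow V V₅ 3
        = Submodule.map (LinearMap.mulLeft ℂ (ExteriorAlgebra.ι ℂ v)) (EPW.extPow V V₅ 2) ∧
      finrank ℂ
        (Submodule.map (LinearMap.mulLeft ℂ (ExteriorAlgebra.ι ℂ v)) (EPW.extPow V V₅ 2)) = 6) ∧
    ((Submodule.map (LinearMap.mulLeft ℂ (ExteriorAlgebra.ι ℂ v)) (EPW.extPow V V₅ 2) : Set _)
      = {β | β ∈ EPW.extPow V V₅ 3 ∧ ∀ γ ∈ EPW.vWedge V v V₅,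
          EPW.volC V 6 vol (ExteriorAlgebra.ι ℂ x * γ * β) = 0}) ∧
    ({w : ExteriorAlgebra ℂ V | w ∈ EPW.extPow V V₅ 2 ∧
        ∃ η ∈ EPW.extPow V V₅ 3, η + ExteriorAlgebra.ι ℂ x * w ∈ EPW.Fv V v}
      = (EPW.vWedge V v V₅ : Set _)) := by
  rw [EPW.vWedge_eq_wedge]
  exact stmt5_general (n := 4) (p := 1) (q := 1) rfl (EPW.injOn_volC hvol.injective) hV₅ hx hv5 hv
end
end

section
/- For every linear subspace W ⊆ ⋀²V₅ and every symmetric bilinear form q : W × W → ℂ, the set A(W,q) is a Lagrangian subspace of (⋀³V₆, ω): it is a linear subspace of dimension 10 on which ω vanishes identically. Moreover A(W,q) ∩ ⋀³V₅ = {η ∈ ⋀³V₅ : vol(x∧η∧w′) = 0 for all w′ ∈ W}, which is a subspace of dimension 10 − dim W. -/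
open ExteriorAlgebra Module

noncomputable section

namespace EPW

variable (V : Type) [AddCommGroup V] [Module ℂ V]

/-- The Lagrangian subspace `A(W,q)` associated to a subspace `W ⊆ ⋀²V₅` and a bilinear
form `q` on `W`:  `A(W,q) = {η + x∧w : w ∈ W, η ∈ ⋀³V₅, vol(x∧η∧w') = -q(w,w') ∀ w' ∈ W}`. -/
def AWq (vol : ⋀[ℂ]^6 V →ₗ[ℂ] ℂ) (x : V) (V₅ : Submodule ℂ V)
    (W : Submodule ℂ (ExteriorAlgebra ℂ V)) (q : W →ₗ[ℂ] W →ₗ[ℂ] ℂ) :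
    Submodule ℂ (ExteriorAlgebra ℂ V) where
  carrier := {z | ∃ w : W, ∃ η ∈ extPow V V₅ 3,
    z = η + ExteriorAlgebra.ι ℂ x * (w : ExteriorAlgebra ℂ V) ∧
    ∀ w' : W, volC V 6 vol (ExteriorAlgebra.ι ℂ x * η * (w' : ExteriorAlgebra ℂ V)) = - q w w'}
  add_mem' := by
    rintro a b ⟨w, η, hη, rfl, hc⟩ ⟨w', η', hη', rfl, hc'⟩
    refine ⟨w + w', η + η', add_mem hη hη', ?_, ?_⟩
    · rw [Submodule.coe_add, mul_add]
      abel
    · intro w₀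
      have h1 : ExteriorAlgebra.ι ℂ x * (η + η') * (w₀ : ExteriorAlgebra ℂ V)
          = ExteriorAlgebra.ι ℂ x * η * (w₀ : ExteriorAlgebra ℂ V)
            + ExteriorAlgebra.ι ℂ x * η' * (w₀ : ExteriorAlgebra ℂ V) := by
        rw [mul_add, add_mul]
      rw [h1, map_add, hc w₀, hc' w₀, map_add, LinearMap.add_apply]
      ring
  zero_mem' := by
    refine ⟨0, 0, zero_mem _, by simp, ?_⟩
    intro w'
    simp
  smul_mem' := by
    rintro c a ⟨w, η, hη, rfl, hc⟩
    refine ⟨c • w, c • η, Submodule.smul_mem _ c hη, ?_, ?_⟩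
    · rw [Submodule.coe_smul, smul_add, mul_smul_comm]
    · intro w₀
      have h1 : ExteriorAlgebra.ι ℂ x * (c • η) * (w₀ : ExteriorAlgebra ℂ V)
          = c • (ExteriorAlgebra.ι ℂ x * η * (w₀ : ExteriorAlgebra ℂ V)) := by
        rw [mul_smul_comm, smul_mul_assoc]
      rw [h1, map_smul, hc w₀, map_smul, LinearMap.smul_apply, smul_eq_mul, smul_eq_mul]
      ring

end EPW

/-
Since `x ∉ V₅`, the map `(η, w) ↦ η + x ∧ w` is injective on `⋀³V₅ × ⋀²V₅`, so `A(W,q)` is the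
kernel of `(η, w) ↦ vol (x ∧ η ∧ ·) + q w` on `⋀³V₅ × W`, with values in the dual of `W`. The
pairing `(η, w) ↦ vol (x ∧ η ∧ w)` on `⋀³V₅ × ⋀²V₅` is perfect, because `vol (x ∧ ·)` does not
vanish on `⋀⁵V₅` and complementary wedge monomials in a basis of `V₅` are dual up to sign. Hence
already `η ↦ vol (x ∧ η ∧ ·)` maps onto the dual of `W`, and rank-nullity gives both dimensions.
Finally, as `⋀⁶V₅ = 0`,
`vol ((η + x ∧ w) ∧ (η' + x ∧ w')) = vol (x ∧ η' ∧ w) - vol (x ∧ η ∧ w') = q w w' - q w' w`,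
which vanishes by symmetry of `q`.
-/

open CliffordAlgebra (contractLeft contractLeft_ι_mul contractLeft_algebraMap)

namespace EPW

section CommRing

variable {R M N : Type*} [CommRing R] [AddCommGroup M] [Module R M] [AddCommGroup N] [Module R N]

theorem ι_mul_of_mem_exteriorPower (x : M) {k : ℕ} {z : ExteriorAlgebra R M}
    (hz : z ∈ ⋀[R]^k M) : ι R x * z = (-1 : R) ^ k • (z * ι R x) := by
  induction hz using Submodule.pow_induction_on_left' with
  | algebraMap r => simp [Algebra.commutes]
  | add a b i _ _ iha ihb => rw [mul_add, add_mul, iha, ihb, smul_add]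
  | mem_mul m hm i a _ ih =>
    obtain ⟨u, rfl⟩ := hm
    have hswap : ι R x * ι R u = -(ι R u * ι R x) :=
      eq_neg_of_add_eq_zero_left (ι_add_mul_swap x u)
    rw [← mul_assoc, hswap, neg_mul, mul_assoc, ih, pow_succ]
    simp [mul_assoc]

theorem mul_comm_of_mem_exteriorPower {j k : ℕ} {a b : ExteriorAlgebra R M}
    (ha : a ∈ ⋀[R]^j M) (hb : b ∈ ⋀[R]^k M) : a * b = (-1 : R) ^ (j * k) • (b * a) := by
  induction ha using Submodule.pow_induction_on_left' with
  | algebraMap r => simp [Algebra.commutes]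
  | add a a' i _ _ ih ih' => rw [add_mul, mul_add, ih, ih', smul_add]
  | mem_mul m hm i a _ ih =>
    obtain ⟨u, rfl⟩ := hm
    rw [mul_assoc, ih, mul_smul_comm, ← mul_assoc, ι_mul_of_mem_exteriorPower u hb,
      smul_mul_assoc, smul_smul, mul_assoc, Nat.succ_mul, pow_add]

theorem add_ι_mul_mul_add_ι_mul (x : M) {j k : ℕ} {η η' w : ExteriorAlgebra R M}
    (hη : η ∈ ⋀[R]^j M) (hη' : η' ∈ ⋀[R]^j M) (hw : w ∈ ⋀[R]^k M) (w' : ExteriorAlgebra R M) :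
    (η + ι R x * w) * (η' + ι R x * w') =
      η * η' + (-1 : R) ^ j • (ι R x * η * w') + (-1 : R) ^ (k * j) • (ι R x * η' * w) := by
  have hηx : η * (ι R x * w') = (-1 : R) ^ j • (ι R x * η * w') := by
    rw [ι_mul_of_mem_exteriorPower x hη, smul_mul_assoc, smul_smul, ← mul_pow]
    simp [mul_assoc]
  have hwη' : ι R x * w * η' = (-1 : R) ^ (k * j) • (ι R x * η' * w) := by
    rw [mul_assoc, mul_comm_of_mem_exteriorPower hw hη', mul_smul_comm, mul_assoc]
  have hxx : ι R x * w * (ι R x * w') = 0 := by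
    rw [ι_mul_of_mem_exteriorPower x hw, smul_mul_assoc, mul_assoc, ← mul_assoc (ι R x),
      ι_sq_zero, zero_mul, mul_zero, smul_zero]
  rw [add_mul, mul_add, mul_add, hηx, hwη', hxx, add_zero]

theorem map_ι_pow_le_exteriorPower (U : Submodule R M) (k : ℕ) : U.map (ι R) ^ k ≤ ⋀[R]^k M :=
  pow_le_pow_left' LinearMap.map_le_range k

theorem map_ι_pow_eq_map_exteriorPower (U : Submodule R M) (k : ℕ) :
    U.map (ι R) ^ k = (⋀[R]^k U).map (map U.subtype).toLinearMap := by
  rw [exteriorPower, Submodule.map_pow, ι_range_map_map, Submodule.range_subtype]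

theorem contractLeft_map_eq_zero {f : M →ₗ[R] N} {d : Dual R N} (hd : d ∘ₗ f = 0)
    (z : ExteriorAlgebra R M) : contractLeft (Q := 0) d (map f z) = 0 := by
  induction z using CliffordAlgebra.left_induction with
  | algebraMap r => rw [AlgHom.commutes, contractLeft_algebraMap]
  | add a b ha hb => rw [map_add, map_add, ha, hb, add_zero]
  | ι_mul a m ha =>
    rw [map_mul, map_apply_ι, contractLeft_ι_mul, ha, mul_zero, sub_zero,
      ← LinearMap.comp_apply, hd, LinearMap.zero_apply, zero_smul]

theorem ιMulti_family_compl_mul_eq_zero {I : Type*} [LinearOrder I] [Fintype I] (v : I → M)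
    {j k : ℕ} (hjk : j + k = Fintype.card I) {s t : Set.powersetCard I k} (hst : t ≠ s) :
    ιMulti_family R j v (Set.powersetCard.compl hjk s) * ιMulti_family R k v t = 0 := by
  refine ιMulti_family_mul_of_not_disjoint R v _ t fun hdisj ↦ hst (Subtype.ext ?_)
  rw [Set.powersetCard.coe_compl, disjoint_compl_left_iff] at hdisj
  exact Finset.eq_of_subset_of_card_le hdisj (s.2.trans t.2.symm).le

theorem apply_ιMulti_family_ne_zero {I : Type*} [LinearOrder I] [Fintype I] (b : Basis I R M)
    {n : ℕ} (hn : n = Fintype.card I) {L : ExteriorAlgebra R M →ₗ[R] R}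
    (hL : ∃ z ∈ ⋀[R]^n M, L z ≠ 0) (s : Set.powersetCard I n) : L (ιMulti_family R n b s) ≠ 0 := by
  obtain ⟨z, hz, hLz⟩ := hL
  refine fun hs ↦ hLz ?_
  have htop (t : Set.powersetCard I n) : t = s :=
    Subtype.ext (((Finset.card_eq_iff_eq_univ _).1 (Eq.trans t.2 hn)).trans
      ((Finset.card_eq_iff_eq_univ _).1 (Eq.trans s.2 hn)).symm)
  have hspan : ⋀[R]^n M ≤ LinearMap.ker L := by
    rw [← exteriorPower.ιMulti_family_span_fixedDegree_of_span R b.span_eq, Submodule.span_le]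
    rintro _ ⟨t, rfl⟩
    rwa [htop t]
  exact hspan hz

theorem eq_zero_of_forall_exteriorPower_apply_mul_eq_zero [IsDomain R] [Module.Free R M]
    [Module.Finite R M] {j k : ℕ} (hjk : j + k = finrank R M) {L : ExteriorAlgebra R M →ₗ[R] R}
    (hL : ∃ z ∈ ⋀[R]^(j + k) M, L z ≠ 0) {w : ExteriorAlgebra R M} (hw : w ∈ ⋀[R]^k M)
    (h : ∀ η ∈ ⋀[R]^j M, L (η * w) = 0) : w = 0 := by
  let b := finBasis R M
  have hcard : j + k = Fintype.card (Fin (finrank R M)) := by rw [hjk, Fintype.card_fin]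
  rw [← exteriorPower.ιMulti_family_span_fixedDegree_of_span R b.span_eq,
    Submodule.mem_span_range_iff_exists_fun] at hw
  obtain ⟨c, rfl⟩ := hw
  refine Finset.sum_eq_zero fun s _ ↦ ?_
  suffices c s = 0 by rw [this, zero_smul]
  let s' := Set.powersetCard.compl hcard s
  have hdisj : Disjoint s'.val s.val := disjoint_compl_left
  have hs : c s * L (ιMulti_family R j b s' * ιMulti_family R k b s) = 0 := by
    have := h _ (ιMulti_range R j ⟨_, rfl⟩ : ιMulti_family R j b s' ∈ ⋀[R]^j M)
    rwa [Finset.mul_sum, Finset.sum_eq_single s, mul_smul_comm, map_smul, smul_eq_mul] at this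
    · intro t _ hts
      rw [mul_smul_comm, ιMulti_family_compl_mul_eq_zero b hcard hts, smul_zero]
    · simp
  refine (mul_eq_zero.1 hs).resolve_right ?_
  rw [ιMulti_family_mul_of_disjoint R b s' s hdisj, Units.smul_def, map_zsmul,
    ← Units.smul_def]
  exact (smul_ne_zero_iff_ne _).2 (apply_ιMulti_family_ne_zero b hcard hL _)

end CommRing

section Field

variable {K V : Type*} [Field K] [AddCommGroup V] [Module K V]

theorem finrank_ker_coprod_add_finrank {V₁ V₂ V₃ : Type*} [AddCommGroup V₁] [Module K V₁]
    [AddCommGroup V₂] [Module K V₂] [AddCommGroup V₃] [Module K V₃] [FiniteDimensional K V₁]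
    [FiniteDimensional K V₂] {f : V₁ →ₗ[K] V₃} (hf : Function.Surjective f) (g : V₂ →ₗ[K] V₃) :
    finrank K (LinearMap.ker (f.coprod g)) + finrank K V₃ = finrank K V₁ + finrank K V₂ := by
  have hrange : LinearMap.range (f.coprod g) = ⊤ := by
    rw [LinearMap.range_coprod, LinearMap.range_eq_top.2 hf, top_sup_eq]
  have hrank := LinearMap.finrank_range_add_finrank_ker (f.coprod g)
  rwa [hrange, finrank_top, finrank_prod, add_comm] at hrank

theorem map_subtype_injective (U : Submodule K V) : Function.Injective (map (R := K) U.subtype) :=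
  map_injective_field U.ker_subtype

instance finiteDimensional_map_ι_pow (U : Submodule K V) [FiniteDimensional K U] (k : ℕ) :
    FiniteDimensional K ↥(U.map (ι K) ^ k) := by
  rw [map_ι_pow_eq_map_exteriorPower]
  infer_instance

theorem finrank_map_ι_pow (U : Submodule K V) [FiniteDimensional K U] (k : ℕ) :
    finrank K ↥(U.map (ι K) ^ k) = (finrank K U).choose k := by
  rw [map_ι_pow_eq_map_exteriorPower, ← exteriorPower.finrank_eq K k]
  exact (Submodule.equivMapOfInjective _ (map_subtype_injective U) _).finrank_eq.symm

theorem map_ι_pow_eq_bot {U : Submodule K V} [FiniteDimensional K U] {k : ℕ}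
    (hk : finrank K U < k) : U.map (ι K) ^ k = ⊥ := by
  rw [← Submodule.finrank_eq_zero (R := K), finrank_map_ι_pow, Nat.choose_eq_zero_of_lt hk]

theorem eq_zero_of_forall_map_ι_pow_apply_mul_eq_zero {U : Submodule K V} [FiniteDimensional K U]
    {j k : ℕ} (hjk : j + k = finrank K U) {L : ExteriorAlgebra K V →ₗ[K] K}
    (hL : ∃ z ∈ U.map (ι K) ^ (j + k), L z ≠ 0) {w : ExteriorAlgebra K V}
    (hw : w ∈ U.map (ι K) ^ k) (h : ∀ η ∈ U.map (ι K) ^ j, L (η * w) = 0) : w = 0 := by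
  simp only [map_ι_pow_eq_map_exteriorPower] at hL hw h
  obtain ⟨_, ⟨z, hz, rfl⟩, hLz⟩ := hL
  obtain ⟨w, hw, rfl⟩ := hw
  suffices w = 0 by rw [this, map_zero]
  refine eq_zero_of_forall_exteriorPower_apply_mul_eq_zero hjk
    (L := L ∘ₗ (map U.subtype).toLinearMap)
    ⟨z, hz, hLz⟩ hw fun η hη ↦ ?_
  simpa using h _ ⟨η, hη, rfl⟩

-- Contraction with a functional `d` that vanishes on `U` but not at `x` kills `η` and sends
-- `x ∧ w` to `d x • w`.
theorem eq_zero_of_add_ι_mul_eq_zero {U : Submodule K V} {x : V} (hx : x ∉ U) {j k : ℕ}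
    {η w : ExteriorAlgebra K V} (hη : η ∈ U.map (ι K) ^ j) (hw : w ∈ U.map (ι K) ^ k)
    (h : η + ι K x * w = 0) : η = 0 ∧ w = 0 := by
  suffices w = 0 from ⟨by simpa [this] using h, this⟩
  rw [map_ι_pow_eq_map_exteriorPower] at hη hw
  obtain ⟨η, -, rfl⟩ := hη
  obtain ⟨w, -, rfl⟩ := hw
  obtain ⟨d, hdx, hdU⟩ := U.exists_dual_map_eq_bot_of_notMem hx inferInstance
  have hd : d ∘ₗ U.subtype = 0 := by
    rwa [← LinearMap.range_eq_bot, LinearMap.range_comp, Submodule.range_subtype]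
  have hcontract := congrArg (contractLeft (Q := 0) d) h
  rw [AlgHom.toLinearMap_apply, AlgHom.toLinearMap_apply, map_add, contractLeft_ι_mul,
    contractLeft_map_eq_zero hd, contractLeft_map_eq_zero hd, mul_zero, sub_zero, zero_add,
    map_zero] at hcontract
  exact (smul_eq_zero.1 hcontract).resolve_left hdx

end Field

section Lagrangian

variable {V : Type} [AddCommGroup V] [Module ℂ V]

instance finiteDimensional_extPow (U : Submodule ℂ V) [FiniteDimensional ℂ U] (k : ℕ) :
    FiniteDimensional ℂ (extPow V U k) :=
  finiteDimensional_map_ι_pow U k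

theorem volC_eq_zero_iff {k : ℕ} {vol : ⋀[ℂ]^k V →ₗ[ℂ] ℂ} (hvol : Function.Injective vol)
    {z : ExteriorAlgebra ℂ V} (hz : z ∈ ⋀[ℂ]^k V) : volC V k vol z = 0 ↔ z = 0 := by
  have hproj : DirectSum.decompose (fun i : ℕ ↦ ⋀[ℂ]^i V) z k = ⟨z, hz⟩ :=
    Subtype.ext (DirectSum.decompose_of_mem_same _ hz)
  change vol (DirectSum.decompose (fun i : ℕ ↦ ⋀[ℂ]^i V) z k) = 0 ↔ z = 0
  rw [hproj, map_eq_zero_iff vol hvol, Submodule.mk_eq_zero]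

variable (vol : ⋀[ℂ]^6 V →ₗ[ℂ] ℂ) (x : V) (U : Submodule ℂ V)
  (W : Submodule ℂ (ExteriorAlgebra ℂ V))

/-- The map `⋀³U → W^∨` sending `η` to the functional `w ↦ vol (x ∧ η ∧ w)`. In terms of it, the
condition defining `A(W,q)` reads `volPairing η = -q w`. -/
def volPairing : extPow V U 3 →ₗ[ℂ] Dual ℂ W :=
  ((LinearMap.mul ℂ (ExteriorAlgebra ℂ V)).compr₂
    (volC V 6 vol ∘ₗ LinearMap.mulLeft ℂ (ι ℂ x))).domRestrict₁₂ (extPow V U 3) W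

theorem volPairing_apply (η : extPow V U 3) (w : W) :
    volPairing vol x U W η w = volC V 6 vol (ι ℂ x * η * w) := by
  rw [mul_assoc]
  rfl

/-- The parametrization `(η, w) ↦ η + x ∧ w`, which identifies `A(W,q)` with a subspace of
`⋀³U × W`. -/
def addWedge : extPow V U 3 × W →ₗ[ℂ] ExteriorAlgebra ℂ V :=
  (extPow V U 3).subtype.coprod (LinearMap.mulLeft ℂ (ι ℂ x) ∘ₗ W.subtype)

theorem addWedge_apply (p : extPow V U 3 × W) : addWedge x U W p = p.1 + ι ℂ x * p.2 := rfl

theorem AWq_eq_map_ker (q : W →ₗ[ℂ] W →ₗ[ℂ] ℂ) :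
    AWq V vol x U W q =
      (LinearMap.ker ((volPairing vol x U W).coprod q)).map (addWedge x U W) := by
  have hker (η : extPow V U 3) (w : W) : (η, w) ∈ LinearMap.ker ((volPairing vol x U W).coprod q) ↔
      ∀ w' : W, volC V 6 vol (ι ℂ x * η * w') = -q w w' := by
    simp only [LinearMap.mem_ker, LinearMap.coprod_apply, add_eq_zero_iff_eq_neg,
      LinearMap.ext_iff, LinearMap.neg_apply, volPairing_apply]
  ext z
  constructor
  · rintro ⟨w, η, hη, rfl, hc⟩
    exact ⟨(⟨η, hη⟩, w), (hker _ w).2 hc, rfl⟩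
  · rintro ⟨⟨η, w⟩, hp, rfl⟩
    exact ⟨w, η, η.2, rfl, (hker η w).1 hp⟩

variable {vol x U W} {q : W →ₗ[ℂ] W →ₗ[ℂ] ℂ}

theorem addWedge_injective (hx : x ∉ U) (hW : W ≤ extPow V U 2) :
    Function.Injective (addWedge x U W) := by
  refine (injective_iff_map_eq_zero _).2 fun p hp ↦ ?_
  obtain ⟨hη, hw⟩ := eq_zero_of_add_ι_mul_eq_zero hx p.1.2 (hW p.2.2) hp
  exact Prod.ext (Subtype.ext hη) (Subtype.ext hw)

theorem exists_extPow_volC_ι_mul_ne_zero (hvol : Function.Injective vol) (hU : finrank ℂ U = 5)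
    (hx : x ∉ U) : ∃ z ∈ extPow V U 5, volC V 6 vol (ι ℂ x * z) ≠ 0 := by
  have : FiniteDimensional ℂ U := .of_finrank_pos (by rw [hU]; norm_num)
  have hbot : extPow V U 5 ≠ ⊥ := by
    rw [ne_eq, extPow, ← Submodule.finrank_eq_zero (R := ℂ), finrank_map_ι_pow, hU]
    norm_num
  obtain ⟨z, hz, hz0⟩ := Submodule.exists_mem_ne_zero_of_ne_bot hbot
  have hxz : ι ℂ x * z ∈ ⋀[ℂ]^6 V := by
    rw [exteriorPower, pow_succ' _ 5]
    exact Submodule.mul_mem_mul ⟨x, rfl⟩ (map_ι_pow_le_exteriorPower U 5 hz)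
  refine ⟨z, hz, fun h ↦ hz0 ?_⟩
  exact (eq_zero_of_add_ι_mul_eq_zero hx (zero_mem (U.map (ι ℂ) ^ 0)) hz
    (by rw [zero_add, (volC_eq_zero_iff hvol hxz).1 h])).2

theorem volPairing_surjective (hvol : Function.Injective vol) (hU : finrank ℂ U = 5) (hx : x ∉ U)
    (hW : W ≤ extPow V U 2) : Function.Surjective (volPairing vol x U W) := by
  have : FiniteDimensional ℂ U := .of_finrank_pos (by rw [hU]; norm_num)
  rw [← LinearMap.flip_injective_iff₁, injective_iff_map_eq_zero]
  refine fun w hw ↦ Subtype.ext ?_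
  exact eq_zero_of_forall_map_ι_pow_apply_mul_eq_zero hU.symm
    (L := volC V 6 vol ∘ₗ LinearMap.mulLeft ℂ (ι ℂ x))
    (exists_extPow_volC_ι_mul_ne_zero hvol hU hx) (hW w.2)
    fun η hη ↦ LinearMap.congr_fun hw ⟨η, hη⟩

theorem AWq_le_exteriorPower (hW : W ≤ extPow V U 2) : AWq V vol x U W q ≤ ⋀[ℂ]^3 V := by
  rintro _ ⟨w, η, hη, rfl, -⟩
  have hw : (w : ExteriorAlgebra ℂ V) ∈ ⋀[ℂ]^2 V := map_ι_pow_le_exteriorPower U 2 (hW w.2)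
  refine add_mem (map_ι_pow_le_exteriorPower U 3 hη) ?_
  rw [exteriorPower, pow_succ' _ 2]
  exact Submodule.mul_mem_mul ⟨x, rfl⟩ hw

theorem volC_mul_eq_zero_of_mem_AWq (hU : finrank ℂ U = 5) (hW : W ≤ extPow V U 2)
    (hq : ∀ w w' : W, q w w' = q w' w) {a b : ExteriorAlgebra ℂ V}
    (ha : a ∈ AWq V vol x U W q) (hb : b ∈ AWq V vol x U W q) : volC V 6 vol (a * b) = 0 := by
  have : FiniteDimensional ℂ U := .of_finrank_pos (by rw [hU]; norm_num)
  obtain ⟨w, η, hη, rfl, hc⟩ := ha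
  obtain ⟨w', η', hη', rfl, hc'⟩ := hb
  have hηη' : η * η' = 0 := by
    have hmem : η * η' ∈ U.map (ι ℂ) ^ (3 + 3) := by
      rw [pow_add]
      exact Submodule.mul_mem_mul hη hη'
    rwa [map_ι_pow_eq_bot (by rw [hU]; norm_num), Submodule.mem_bot] at hmem
  rw [add_ι_mul_mul_add_ι_mul x (map_ι_pow_le_exteriorPower U 3 hη)
    (map_ι_pow_le_exteriorPower U 3 hη') (map_ι_pow_le_exteriorPower U 2 (hW w.2)), hηη', zero_add,
    map_add, map_smul, map_smul, hc, hc', hq w w']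
  norm_num

theorem finrank_AWq [FiniteDimensional ℂ U] (hx : x ∉ U) (hW : W ≤ extPow V U 2)
    (hsurj : Function.Surjective (volPairing vol x U W)) :
    finrank ℂ (AWq V vol x U W q) = finrank ℂ (extPow V U 3) := by
  have : FiniteDimensional ℂ W := Submodule.finiteDimensional_of_le hW
  have hrank := finrank_ker_coprod_add_finrank hsurj q
  rw [Subspace.dual_finrank_eq] at hrank
  rw [AWq_eq_map_ker,
    ← (Submodule.equivMapOfInjective _ (addWedge_injective hx hW) _).finrank_eq]
  exact Nat.add_right_cancel hrank

theorem AWq_inf_extPow_eq_map_ker (hx : x ∉ U) (hW : W ≤ extPow V U 2) :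
    AWq V vol x U W q ⊓ extPow V U 3 =
      (LinearMap.ker (volPairing vol x U W)).map (extPow V U 3).subtype := by
  rw [AWq_eq_map_ker]
  ext z
  constructor
  · rintro ⟨⟨⟨η, w⟩, hp, hz⟩, hz3⟩
    obtain ⟨rfl, rfl⟩ : η = ⟨z, hz3⟩ ∧ w = 0 := by
      refine Prod.ext_iff.1 (addWedge_injective hx hW (hz.trans ?_) : (η, w) = (⟨z, hz3⟩, 0))
      simp [addWedge_apply]
    exact ⟨_, by simpa using hp, rfl⟩
  · rintro ⟨η, hη, rfl⟩
    exact ⟨⟨(η, 0), by simpa using hη, by simp [addWedge_apply]⟩, η.2⟩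

theorem mem_AWq_inf_extPow (hx : x ∉ U) (hW : W ≤ extPow V U 2) {η : ExteriorAlgebra ℂ V} :
    η ∈ AWq V vol x U W q ⊓ extPow V U 3 ↔
      η ∈ extPow V U 3 ∧ ∀ w : W, volC V 6 vol (ι ℂ x * η * w) = 0 := by
  rw [AWq_inf_extPow_eq_map_ker hx hW, Submodule.mem_map]
  simp [LinearMap.ext_iff, volPairing_apply, and_comm]

theorem finrank_AWq_inf_extPow [FiniteDimensional ℂ U] (hx : x ∉ U) (hW : W ≤ extPow V U 2)
    (hsurj : Function.Surjective (volPairing vol x U W)) :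
    finrank ℂ ↥(AWq V vol x U W q ⊓ extPow V U 3) = finrank ℂ (extPow V U 3) - finrank ℂ W := by
  have hrank := LinearMap.finrank_range_add_finrank_ker (volPairing vol x U W)
  rw [LinearMap.range_eq_top.2 hsurj, finrank_top, Subspace.dual_finrank_eq] at hrank
  rw [AWq_inf_extPow_eq_map_ker hx hW, Submodule.finrank_map_subtype_eq]
  omega

end Lagrangian

end EPW

theorem stmt6 (V : Type) [AddCommGroup V] [Module ℂ V]
    (hdim : finrank ℂ V = 6)
    (vol : ⋀[ℂ]^6 V →ₗ[ℂ] ℂ) (hvol : Function.Bijective vol)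
    (V₅ : Submodule ℂ V) (hV₅ : finrank ℂ V₅ = 5)
    (x : V) (hx : x ∉ V₅)
    (W : Submodule ℂ (ExteriorAlgebra ℂ V)) (hW : W ≤ EPW.extPow V V₅ 2)
    (q : W →ₗ[ℂ] W →ₗ[ℂ] ℂ) (hq : ∀ a b : W, q a b = q b a) :
    (EPW.AWq V vol x V₅ W q ≤ ⋀[ℂ]^3 V ∧
      finrank ℂ (EPW.AWq V vol x V₅ W q) = 10 ∧
      (∀ a b : ExteriorAlgebra ℂ V, a ∈ EPW.AWq V vol x V₅ W q →
        b ∈ EPW.AWq V vol x V₅ W q → EPW.volC V 6 vol (a * b) = 0)) ∧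
    ((EPW.AWq V vol x V₅ W q ⊓ EPW.extPow V V₅ 3 : Submodule ℂ (ExteriorAlgebra ℂ V)) : Set _)
      = {η | η ∈ EPW.extPow V V₅ 3 ∧
          ∀ w' : W, EPW.volC V 6 vol
            (ExteriorAlgebra.ι ℂ x * η * (w' : ExteriorAlgebra ℂ V)) = 0} ∧
    finrank ℂ (EPW.AWq V vol x V₅ W q ⊓ EPW.extPow V V₅ 3 : Submodule ℂ (ExteriorAlgebra ℂ V))
      = 10 - finrank ℂ W := by
  have : FiniteDimensional ℂ V₅ := .of_finrank_pos (by rw [hV₅]; norm_num)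
  have hdim₃ : finrank ℂ (EPW.extPow V V₅ 3) = 10 := by
    rw [EPW.extPow, EPW.finrank_map_ι_pow, hV₅]
    rfl
  have hsurj := EPW.volPairing_surjective hvol.injective hV₅ hx hW
  refine ⟨⟨EPW.AWq_le_exteriorPower hW, (EPW.finrank_AWq hx hW hsurj).trans hdim₃,
    fun _ _ ↦ EPW.volC_mul_eq_zero_of_mem_AWq hV₅ hW hq⟩,
    Set.ext fun _ ↦ EPW.mem_AWq_inf_extPow hx hW, ?_⟩
  rw [EPW.finrank_AWq_inf_extPow hx hW hsurj, hdim₃]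
end
end

section
/- For every linear subspace W ⊆ ⋀²V₅ and every symmetric bilinear form q on W, one has A(W,q) ∩ F_x = {x∧w : w ∈ W and q(w,w′) = 0 for all w′ ∈ W}; in particular dim(A(W,q) ∩ F_x) equals the dimension of the radical of q. -/
open ExteriorAlgebra Module

noncomputable section

/-!
For a linear form `d` vanishing on `V₅` with `d x ≠ 0`, contraction with `d` kills `⋀ᵏV₅`, so it
sends `x ∧ η` to `d x • η` there: wedging with `x` is injective on `⋀ᵏV₅`. On the other hand,
wedging with `x` kills `F_x`. Hence if `η + x ∧ w ∈ F_x` with `η ∈ ⋀³V₅`, then `x ∧ η = 0` and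
`η = 0`, and the condition defining `A(W, q)` reduces to `q(w, ·) = 0`. Injectivity on `⋀²V₅ ⊇ W`
identifies the intersection with the radical of `q`.
-/

namespace EPW

section Contraction

open CliffordAlgebra

theorem contractLeft_eq_zero_of_mem_map_ι_pow {R M : Type*} [CommRing R] [AddCommGroup M]
    [Module R M] {Q : QuadraticForm R M} {U : Submodule R M} {d : Dual R M}
    (hd : U ≤ LinearMap.ker d) {n : ℕ} {η : CliffordAlgebra Q}
    (hη : η ∈ U.map (CliffordAlgebra.ι Q) ^ n) : contractLeft d η = 0 := by
  induction hη using Submodule.pow_induction_on_left' with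
  | algebraMap r => exact contractLeft_algebraMap Q d r
  | add a b _ _ _ ha hb => rw [map_add, ha, hb, add_zero]
  | mem_mul m hm _ a _ ha =>
    obtain ⟨u, hu, rfl⟩ := hm
    rw [contractLeft_ι_mul, ha, LinearMap.mem_ker.mp (hd hu), zero_smul, mul_zero, sub_zero]

theorem disjoint_map_ι_pow_ker_mulLeft {K M : Type*} [Field K] [AddCommGroup M] [Module K M]
    (Q : QuadraticForm K M) {U : Submodule K M} {x : M} (hx : x ∉ U) (n : ℕ) :
    Disjoint (U.map (CliffordAlgebra.ι Q) ^ n)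
      (LinearMap.ker (LinearMap.mulLeft K (CliffordAlgebra.ι Q x))) := by
  obtain ⟨d, hdx, hd⟩ := Submodule.exists_le_ker_of_notMem hx
  refine LinearMap.disjoint_ker.mpr fun η hη (hxη : CliffordAlgebra.ι Q x * η = 0) => ?_
  have hdη : d x • η = 0 := calc
    d x • η = contractLeft d (CliffordAlgebra.ι Q x * η) := by
      rw [contractLeft_ι_mul, contractLeft_eq_zero_of_mem_map_ι_pow hd hη, mul_zero, sub_zero]
    _ = 0 := by rw [hxη, map_zero]
  exact (smul_eq_zero.mp hdη).resolve_left hdx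

end Contraction

variable {V : Type} [AddCommGroup V] [Module ℂ V]

theorem extPow_le_exteriorPower (U : Submodule ℂ V) (k : ℕ) : extPow V U k ≤ ⋀[ℂ]^k V :=
  pow_le_pow_left' LinearMap.map_le_range k

theorem disjoint_extPow_ker_mulLeft {U : Submodule ℂ V} {x : V} (hx : x ∉ U) (k : ℕ) :
    Disjoint (extPow V U k) (LinearMap.ker (LinearMap.mulLeft ℂ (ExteriorAlgebra.ι ℂ x))) :=
  disjoint_map_ι_pow_ker_mulLeft 0 hx k

theorem Fv_le_ker_mulLeft (v : V) :
    Fv V v ≤ LinearMap.ker (LinearMap.mulLeft ℂ (ExteriorAlgebra.ι ℂ v)) := by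
  rintro _ ⟨θ, -, rfl⟩
  rw [LinearMap.mem_ker, LinearMap.mulLeft_apply, LinearMap.mulLeft_apply, ← mul_assoc,
    ι_sq_zero, zero_mul]

theorem add_ι_mul_mem_Fv_iff {U : Submodule ℂ V} {x : V} (hx : x ∉ U) {k : ℕ}
    {η w : ExteriorAlgebra ℂ V} (hη : η ∈ extPow V U k) (hw : w ∈ ⋀[ℂ]^2 V) :
    η + ExteriorAlgebra.ι ℂ x * w ∈ Fv V x ↔ η = 0 := by
  have hxw : ExteriorAlgebra.ι ℂ x * w ∈ Fv V x := Submodule.mem_map_of_mem hw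
  rw [Submodule.add_mem_iff_left _ hxw]
  refine ⟨fun h => ?_, fun h => h ▸ zero_mem _⟩
  exact Submodule.disjoint_def.mp (disjoint_extPow_ker_mulLeft hx k) η hη (Fv_le_ker_mulLeft x h)

theorem mem_AWq_inf_Fv_iff (vol : ⋀[ℂ]^6 V →ₗ[ℂ] ℂ) {U : Submodule ℂ V} {x : V} (hx : x ∉ U)
    {W : Submodule ℂ (ExteriorAlgebra ℂ V)} (hW : W ≤ ⋀[ℂ]^2 V) (q : W →ₗ[ℂ] W →ₗ[ℂ] ℂ)
    {z : ExteriorAlgebra ℂ V} :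
    z ∈ AWq V vol x U W q ⊓ Fv V x ↔
      ∃ w : W, (∀ w' : W, q w w' = 0) ∧ z = ExteriorAlgebra.ι ℂ x * (w : ExteriorAlgebra ℂ V) := by
  constructor
  · rintro ⟨⟨w, η, hη, rfl, hwη⟩, hF⟩
    obtain rfl : η = 0 := (add_ι_mul_mem_Fv_iff hx hη (hW w.2)).mp hF
    refine ⟨w, fun w' => ?_, zero_add _⟩
    simpa only [mul_zero, zero_mul, map_zero, zero_eq_neg] using hwη w'
  · rintro ⟨w, hw, rfl⟩
    refine ⟨⟨w, 0, zero_mem _, (zero_add _).symm, fun w' => ?_⟩, Submodule.mem_map_of_mem (hW w.2)⟩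
    rw [mul_zero, zero_mul, map_zero, hw w', neg_zero]

theorem AWq_inf_Fv_eq_map_ker (vol : ⋀[ℂ]^6 V →ₗ[ℂ] ℂ) {U : Submodule ℂ V} {x : V} (hx : x ∉ U)
    {W : Submodule ℂ (ExteriorAlgebra ℂ V)} (hW : W ≤ ⋀[ℂ]^2 V) (q : W →ₗ[ℂ] W →ₗ[ℂ] ℂ) :
    AWq V vol x U W q ⊓ Fv V x =
      (LinearMap.ker q).map ((LinearMap.mulLeft ℂ (ExteriorAlgebra.ι ℂ x)).domRestrict W) := by
  ext z
  simp only [mem_AWq_inf_Fv_iff vol hx hW, Submodule.mem_map, LinearMap.mem_ker,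
    LinearMap.ext_iff, LinearMap.zero_apply, LinearMap.domRestrict_apply,
    LinearMap.mulLeft_apply, eq_comm (a := z)]

theorem rank_AWq_inf_Fv (vol : ⋀[ℂ]^6 V →ₗ[ℂ] ℂ) {U : Submodule ℂ V} {x : V} (hx : x ∉ U)
    {W : Submodule ℂ (ExteriorAlgebra ℂ V)} (hW : W ≤ extPow V U 2) (q : W →ₗ[ℂ] W →ₗ[ℂ] ℂ) :
    Module.rank ℂ (AWq V vol x U W q ⊓ Fv V x : Submodule ℂ (ExteriorAlgebra ℂ V)) =
      Module.rank ℂ (LinearMap.ker q) := by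
  have hinj : Function.Injective
      ((LinearMap.mulLeft ℂ (ExteriorAlgebra.ι ℂ x)).domRestrict W) :=
    (LinearMap.injOn_of_disjoint_ker hW (disjoint_extPow_ker_mulLeft hx 2)).injective
  rw [AWq_inf_Fv_eq_map_ker vol hx (hW.trans (extPow_le_exteriorPower U 2))]
  exact (Submodule.equivMapOfInjective _ hinj _).rank_eq.symm

end EPW

theorem stmt7_general {V : Type} [AddCommGroup V] [Module ℂ V] (vol : ⋀[ℂ]^6 V →ₗ[ℂ] ℂ)
    {U : Submodule ℂ V} {x : V} (hx : x ∉ U)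
    {W : Submodule ℂ (ExteriorAlgebra ℂ V)} (hW : W ≤ EPW.extPow V U 2)
    (q : W →ₗ[ℂ] W →ₗ[ℂ] ℂ) :
    ((EPW.AWq V vol x U W q ⊓ EPW.Fv V x : Submodule ℂ (ExteriorAlgebra ℂ V)) : Set _)
      = {z | ∃ w : W, (∀ w' : W, q w w' = 0) ∧
          z = ExteriorAlgebra.ι ℂ x * (w : ExteriorAlgebra ℂ V)} ∧
    Module.rank ℂ (EPW.AWq V vol x U W q ⊓ EPW.Fv V x : Submodule ℂ (ExteriorAlgebra ℂ V))
      = Module.rank ℂ (LinearMap.ker q) :=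
  ⟨Set.ext fun _ => EPW.mem_AWq_inf_Fv_iff vol hx (hW.trans (EPW.extPow_le_exteriorPower U 2)) q,
    EPW.rank_AWq_inf_Fv vol hx hW q⟩

theorem stmt7 (V : Type) [AddCommGroup V] [Module ℂ V]
    (hdim : finrank ℂ V = 6)
    (vol : ⋀[ℂ]^6 V →ₗ[ℂ] ℂ) (hvol : Function.Bijective vol)
    (V₅ : Submodule ℂ V) (hV₅ : finrank ℂ V₅ = 5)
    (x : V) (hx : x ∉ V₅)
    (W : Submodule ℂ (ExteriorAlgebra ℂ V)) (hW : W ≤ EPW.extPow V V₅ 2)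
    (q : W →ₗ[ℂ] W →ₗ[ℂ] ℂ) (hq : ∀ a b : W, q a b = q b a) :
    ((EPW.AWq V vol x V₅ W q ⊓ EPW.Fv V x : Submodule ℂ (ExteriorAlgebra ℂ V)) : Set _)
      = {z | ∃ w : W, (∀ w' : W, q w w' = 0) ∧
          z = ExteriorAlgebra.ι ℂ x * (w : ExteriorAlgebra ℂ V)} ∧
    finrank ℂ (EPW.AWq V vol x V₅ W q ⊓ EPW.Fv V x : Submodule ℂ (ExteriorAlgebra ℂ V))
      = finrank ℂ (LinearMap.ker q) :=
  (stmt7_general vol hx hW q).imp_right (congrArg Cardinal.toNat)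
end
end

section
/- If M is a ℤ-submodule of ℚ² with L₀ ⊆ M and B(x,x) ∈ 2ℤ for every x ∈ M, then M = L₀; that is, the even lattice with Gram matrix [[10,1],[1,−2]] admits no nontrivial even overlattice. -/
/-!
Let `L` be a lattice with Gram determinant `d`, let `M ⊇ L` be an integral overlattice, and let
`c` be the `i`-th coordinate of some `x ∈ M` in a basis of `L`. Replacing the `i`-th basis vector
by `x` multiplies the Gram determinant by `c ^ 2` and keeps the Gram matrix integral, so `c ^ 2 * d`
is integral. Then `(c * d) ^ 2 = d * (c ^ 2 * d)` shows that `c * d` is integral and that `d`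
divides its square. If `d` is squarefree, it divides `c * d` itself, so `c` is integral and `M = L`.
An even lattice is integral by polarization, and the Gram determinant of `[[10, 1], [1, -2]]` is
`-21`.
-/

open Module
open LinearMap (BilinForm)

theorem det_mem_one_of_forall_mem_one {ι R S : Type*} [Fintype ι] [DecidableEq ι] [CommRing R]
    [CommRing S] [Algebra R S] {A : Matrix ι ι S} (hA : ∀ i j, A i j ∈ (1 : Submodule R S)) :
    A.det ∈ (1 : Submodule R S) := by
  choose G hG using fun i j => Submodule.mem_one.mp (hA i j)
  have hmap : (algebraMap R S).mapMatrix (Matrix.of G) = A := Matrix.ext hG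
  exact Submodule.mem_one.mpr ⟨(Matrix.of G).det, by rw [RingHom.map_det, hmap]⟩

section Integrality

variable {R K : Type*} [CommRing R] [Field K] [Algebra R K]

theorem mem_one_of_sq_mul_algebraMap_mem_one [IsIntegrallyClosed R] [IsFractionRing R K]
    {d : R} (hd : IsRadical d) (hd₀ : d ≠ 0) {c : K}
    (h : c ^ 2 * algebraMap R K d ∈ (1 : Submodule R K)) : c ∈ (1 : Submodule R K) := by
  obtain ⟨r, hr⟩ := Submodule.mem_one.mp h
  have hsq : (c * algebraMap R K d) ^ 2 = algebraMap R K (d * r) := by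
    rw [map_mul, hr]
    ring
  obtain ⟨e, he⟩ := IsIntegrallyClosed.exists_algebraMap_eq_of_isIntegral_pow two_pos
    (hsq ▸ isIntegral_algebraMap : IsIntegral R ((c * algebraMap R K d) ^ 2))
  have hde : d ∣ e ^ 2 := ⟨r, IsFractionRing.injective R K (by rw [map_pow, he, hsq])⟩
  obtain ⟨q, rfl⟩ := hd 2 e hde
  have hd₀' : algebraMap R K d ≠ 0 := (FaithfulSMul.algebraMap_eq_zero_iff R K).not.mpr hd₀
  refine Submodule.mem_one.mpr ⟨q, mul_right_cancel₀ hd₀' ?_⟩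
  rw [← he, map_mul, mul_comm]

theorem le_dualSubmodule_self_of_even {V : Type*} [AddCommGroup V] [Module R V] [Module K V]
    [IsScalarTower R K V] [NeZero (2 : K)] {B : BilinForm K V} (hB : B.IsSymm)
    {M : Submodule R V} (heven : ∀ x ∈ M, ∃ r : R, B x x = 2 * algebraMap R K r) :
    M ≤ B.dualSubmodule M := by
  intro x hx y hy
  obtain ⟨r, hr⟩ := heven x hx
  obtain ⟨s, hs⟩ := heven y hy
  obtain ⟨t, ht⟩ := heven (x + y) (M.add_mem hx hy)
  refine Submodule.mem_one.mpr ⟨t - r - s, ?_⟩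
  rw [hB.polarization, hr, hs, ht, map_sub, map_sub]
  field

end Integrality

section GramDeterminant

variable {ι A V : Type*} [Fintype ι] [DecidableEq ι] [CommRing A] [AddCommGroup V] [Module A V]

theorem det_gram_eq_det_sq_mul (b : Basis ι A V) (B : BilinForm A V) (v : ι → V) :
    (Matrix.of fun i j => B (v i) (v j)).det =
      b.det v ^ 2 * (LinearMap.BilinForm.toMatrix b B).det := by
  have hgram : (Matrix.of fun i j => B (v i) (v j)) =
      (b.toMatrix v).transpose * LinearMap.BilinForm.toMatrix b B * b.toMatrix v := by
    ext i j
    rw [Matrix.of_apply, B.apply_eq_dotProduct_toMatrix_mulVec b, Matrix.mul_assoc]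
    rfl
  rw [hgram, Matrix.det_mul, Matrix.det_mul, Matrix.det_transpose, b.det_apply]
  ring

theorem det_update_self_eq_repr (b : Basis ι A V) (i : ι) (x : V) :
    b.det (Function.update b i x) = b.repr x i := by
  rw [b.det_apply, b.toMatrix_update, b.toMatrix_self, ← Matrix.cramer_apply, Matrix.cramer_one,
    Module.End.one_apply]

end GramDeterminant

theorem eq_span_of_le_dualSubmodule_self_of_isRadical_det {ι R K V : Type*} [Fintype ι]
    [DecidableEq ι] [CommRing R] [IsDomain R] [IsIntegrallyClosed R] [Field K] [Algebra R K]
    [IsFractionRing R K] [AddCommGroup V] [Module R V] [Module K V] [IsScalarTower R K V]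
    (b : Basis ι K V) {B : BilinForm K V} {d : R} (hd : IsRadical d) (hd₀ : d ≠ 0)
    (hdet : (LinearMap.BilinForm.toMatrix b B).det = algebraMap R K d) {M : Submodule R V}
    (hL : Submodule.span R (Set.range b) ≤ M) (hM : M ≤ B.dualSubmodule M) :
    M = Submodule.span R (Set.range b) := by
  refine le_antisymm (fun x hx => (b.mem_span_iff_repr_mem R x).mpr fun i => ?_) hL
  have hv (j : ι) : Function.update b i x j ∈ M := by
    rcases eq_or_ne j i with rfl | hj
    · rwa [Function.update_self]
    · rw [Function.update_of_ne hj]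
      exact hL (Submodule.subset_span (Set.mem_range_self j))
  have hgram := det_gram_eq_det_sq_mul b B (Function.update b i x)
  rw [det_update_self_eq_repr, hdet] at hgram
  have hint : b.repr x i ^ 2 * algebraMap R K d ∈ (1 : Submodule R K) :=
    hgram ▸ det_mem_one_of_forall_mem_one fun j k => hM (hv j) _ (hv k)
  exact Submodule.mem_one.mp (mem_one_of_sq_mul_algebraMap_mem_one hd hd₀ hint)

/-- The bilinear form on `ℚ²` whose Gram matrix in the standard basis is `[[10, 1], [1, -2]]`. -/
def latticeForm : BilinForm ℚ (Fin 2 → ℚ) :=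
  Matrix.toBilin' !![10, 1; 1, -2]

theorem latticeForm_apply (x y : Fin 2 → ℚ) :
    latticeForm x y = 10 * x 0 * y 0 + x 0 * y 1 + x 1 * y 0 - 2 * x 1 * y 1 := by
  simp only [latticeForm, Matrix.toBilin'_apply, Fin.sum_univ_two, Matrix.of_apply,
    Matrix.cons_val', Matrix.cons_val_fin_one, Matrix.cons_val_zero, Matrix.cons_val_one]
  ring

theorem latticeForm_isSymm : latticeForm.IsSymm := by
  refine Matrix.isSymm_toBilin'_iff_isSymm.mpr (Matrix.IsSymm.ext fun i j => ?_)
  fin_cases i <;> fin_cases j <;> rfl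

theorem det_toMatrix_latticeForm :
    (LinearMap.BilinForm.toMatrix (Pi.basisFun ℚ (Fin 2)) latticeForm).det = -21 := by
  rw [LinearMap.BilinForm.toMatrix_basisFun, latticeForm, LinearMap.BilinForm.toMatrix'_toBilin',
    Matrix.det_fin_two_of]
  norm_num

theorem squarefree_neg_twentyOne : Squarefree (-21 : ℤ) := by
  have h₇ : Nat.Prime 7 := by norm_num
  have h₂₁ : Squarefree (3 * 7) := (Nat.squarefree_mul (by norm_num)).mpr
    ⟨Nat.prime_three.prime.squarefree, h₇.prime.squarefree⟩
  exact Int.squarefree_natAbs.mp h₂₁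

theorem range_basisFun_fin_two (R : Type*) [Semiring R] :
    Set.range (Pi.basisFun R (Fin 2)) = {![1, 0], ![0, 1]} := by
  have hbasis : ⇑(Pi.basisFun R (Fin 2)) = ![![1, 0], ![0, 1]] := by
    ext i j
    fin_cases i <;> fin_cases j <;> simp
  rw [hbasis, Matrix.range_cons_cons_empty]

theorem stmt14_general {M : Submodule ℤ (Fin 2 → ℚ)}
    (hL : Submodule.span ℤ {![(1:ℚ), 0], ![0, 1]} ≤ M) (hM : M ≤ latticeForm.dualSubmodule M) :
    M = Submodule.span ℤ {![(1:ℚ), 0], ![0, 1]} := by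
  rw [← range_basisFun_fin_two] at hL ⊢
  have hdet : (LinearMap.BilinForm.toMatrix (Pi.basisFun ℚ (Fin 2)) latticeForm).det =
      algebraMap ℤ ℚ (-21) := by
    rw [det_toMatrix_latticeForm, map_neg, map_ofNat]
  exact eq_span_of_le_dualSubmodule_self_of_isRadical_det (Pi.basisFun ℚ (Fin 2))
    squarefree_neg_twentyOne.isRadical squarefree_neg_twentyOne.ne_zero hdet hL hM

theorem stmt14 (B : (Fin 2 → ℚ) → (Fin 2 → ℚ) → ℚ)
    (hB : ∀ x y : Fin 2 → ℚ,
      B x y = 10 * x 0 * y 0 + x 0 * y 1 + x 1 * y 0 - 2 * x 1 * y 1)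
    (M : Submodule ℤ (Fin 2 → ℚ))
    (hL : Submodule.span ℤ {![(1:ℚ), 0], ![0, 1]} ≤ M)
    (heven : ∀ x ∈ M, ∃ k : ℤ, B x x = 2 * k) :
    M = Submodule.span ℤ {![(1:ℚ), 0], ![0, 1]} := by
  obtain rfl : B = fun x y => latticeForm x y := by ext x y; rw [hB, latticeForm_apply]
  exact stmt14_general hL (le_dualSubmodule_self_of_even latticeForm_isSymm heven)
end
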